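/- Let H be a Hopf algebra over a field k with antipode S. Call a k-subspace V of H a subcoalgebra if Δ(V) is contained in the image of V ⊗ V in H ⊗ H, and call a subcoalgebra V simple if V ≠ 0 and the only subcoalgebras of H contained in V are 0 and V. If every simple subcoalgebra of H is contained in the range of S (equivalently, the image S(H) contains the coradical H₀ of H, the sum of all simple subcoalgebras), then S is surjective. -/

import Mathlib

open TensorProduct

variable (k : Type u) [Field k] (H : Type u) [Ring H] [HopfAlgebra k H]

/-- A `k`-subspace `V` of a Hopf algebra `H` is a subcoalgebra if `Δ(V)` is contained in the
image of `V ⊗ V` in `H ⊗ H`. -/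
def IsSubcoalgebra (V : Submodule k H) : Prop :=
  ∀ v ∈ V, Coalgebra.comul (R := k) v ∈
    LinearMap.range (TensorProduct.map V.subtype V.subtype)

/-- A subcoalgebra `V` is simple if it is nonzero and the only subcoalgebras of `H` contained
in it are `0` and `V`. -/
def IsSimpleSubcoalgebra (V : Submodule k H) : Prop :=
  IsSubcoalgebra k H V ∧ V ≠ ⊥ ∧
    ∀ W : Submodule k H, IsSubcoalgebra k H W → W ≤ V → W = ⊥ ∨ W = V

section helpers

/-- In an artinian ring where products of nonzero two-sided ideals are nonzero,
there are no nontrivial two-sided ideals. -/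
theorem aux_prime_artinian {R : Type*} [Ring R] [IsArtinianRing R]
    (hp : ∀ I J : Ideal R, I.IsTwoSided → J.IsTwoSided → (∀ a ∈ I, ∀ b ∈ J, a * b = 0) →
      I = ⊥ ∨ J = ⊥)
    (K : Ideal R) (hK : K.IsTwoSided) : K = ⊥ ∨ K = ⊤ := by
  have hJ : Ring.jacobson R = ⊥ := by
    obtain ⟨n, hn⟩ := IsSemiprimaryRing.isNilpotent (R := R)
    have key : ∀ n : ℕ, (Ring.jacobson R) ^ n = ⊥ → Ring.jacobson R = ⊥ := by
      intro n
      induction n with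
      | zero =>
        intro h
        rw [Submodule.pow_zero, Ideal.one_eq_top] at h
        exact eq_bot_iff.2 (h ▸ le_top)
      | succ n ih =>
        intro h
        have h2 : (Ring.jacobson R ^ n).IsTwoSided := inferInstance
        rcases hp (Ring.jacobson R ^ n) (Ring.jacobson R) h2 inferInstance (by
          intro a ha b hb
          have := Ideal.mul_mem_mul ha hb
          rw [← Submodule.pow_succ, h] at this
          simpa using this) with h1 | h1
        · exact ih h1
        · exact h1
    exact key n hn
  have hs : IsSemisimpleRing R := IsArtinianRing.isSemisimpleRing_iff_jacobson.2 hJ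
  obtain ⟨L, hL⟩ := exists_isCompl K
  let Rn : Ideal R :=
    { carrier := {x | ∀ a ∈ K, a * x = 0}
      add_mem' := by
        intro x y hx hy a ha
        rw [mul_add, hx a ha, hy a ha, add_zero]
      zero_mem' := by intro a _; simp
      smul_mem' := by
        intro c x hx a ha
        rw [smul_eq_mul, ← mul_assoc]
        exact hx _ (hK.mul_mem_of_left c ha) }
  have hRn : Rn.IsTwoSided := ⟨by
    intro x b hx a ha
    rw [← mul_assoc, hx a ha, zero_mul]⟩
  have hLR : L ≤ Rn := by
    intro x hx a ha
    have h1 : a * x ∈ K ⊓ L := ⟨hK.mul_mem_of_left x ha, L.mul_mem_left a hx⟩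
    rw [hL.inf_eq_bot] at h1
    simpa using h1
  rcases hp K Rn hK hRn (fun a ha b hb => hb a ha) with h1 | h1
  · exact Or.inl h1
  · right
    have : L = ⊥ := eq_bot_iff.2 (h1 ▸ hLR)
    have h3 := hL.sup_eq_top
    rwa [this, sup_bot_eq] at h3

variable {k H}

open WithConv

theorem aux_sep (x : H ⊗[k] H)
    (hx : ∀ α β : H →ₗ[k] k, LinearMap.mul' k k (TensorProduct.map α β x) = 0) : x = 0 := by
  let b := Module.Basis.ofVectorSpace k H
  apply (b.tensorProduct b).repr.injective
  rw [map_zero]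
  ext ⟨i, j⟩
  have h1 : (Finsupp.lapply (i, j) ∘ₗ (b.tensorProduct b).repr.toLinearMap : H ⊗[k] H →ₗ[k] k) =
      LinearMap.mul' k k ∘ₗ TensorProduct.map (b.coord i) (b.coord j) := by
    ext u v
    simp [mul_comm]
  have h2 := LinearMap.congr_fun h1 x
  simp only [LinearMap.comp_apply] at h2
  rw [hx] at h2
  simpa using h2

/-- A linear projection-like map fixing `V` with values in `V`. -/
theorem aux_proj (V : Submodule k H) :
    ∃ p : H →ₗ[k] H, (∀ v ∈ V, p v = v) ∧ ∀ x, p x ∈ V := by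
  obtain ⟨q, hq⟩ := V.exists_isCompl
  refine ⟨V.subtype ∘ₗ V.projectionOnto q hq, ?_, ?_⟩
  · intro v hv
    simpa using congrArg Subtype.val (Submodule.projectionOnto_apply_left hq ⟨v, hv⟩)
  · intro x
    simp

/-- Common zeros of a set of functionals. -/
def auxPerp (I : Set (WithConv (H →ₗ[k] k))) : Submodule k H where
  carrier := {h | ∀ f ∈ I, f h = 0}
  add_mem' := by
    intro a b ha hb f hf
    rw [map_add, ha f hf, hb f hf, add_zero]
  zero_mem' := by intro f _; simp
  smul_mem' := by
    intro c x hx f hf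
    rw [map_smul, hx f hf, smul_zero]

theorem aux_mem_range (V : Submodule k H) (p : H →ₗ[k] H) (hp : ∀ x, p x ∈ V)
    (x : H ⊗[k] H) : TensorProduct.map p p x ∈
      LinearMap.range (TensorProduct.map V.subtype V.subtype) := by
  have : TensorProduct.map p p =
      TensorProduct.map V.subtype V.subtype ∘ₗ
        TensorProduct.map (p.codRestrict V hp) (p.codRestrict V hp) := by
    ext; simp
  rw [this]
  exact ⟨_, rfl⟩

theorem aux_perp_sub (I : Ideal (WithConv (H →ₗ[k] k))) (hI : I.IsTwoSided)
    (hc : ∀ f : WithConv (H →ₗ[k] k), (∀ v ∈ auxPerp (k := k) (I : Set (WithConv (H →ₗ[k] k))), f v = 0) → f ∈ I) :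
    IsSubcoalgebra k H (auxPerp (I : Set _)) := by
  intro h hh
  obtain ⟨p, hp1, hp2⟩ := aux_proj (auxPerp (I : Set (WithConv (H →ₗ[k] k))))
  have key : Coalgebra.comul (R := k) h = TensorProduct.map p p (Coalgebra.comul (R := k) h) := by
    rw [← sub_eq_zero]
    apply aux_sep
    intro α β
    have e1 : toConv (α - α ∘ₗ p) ∈ I := hc _ (by intro v hv; simp [hp1 v hv])
    have e2 : toConv (β - β ∘ₗ p) ∈ I := hc _ (by intro v hv; simp [hp1 v hv])
    have f1 := hh _ (hI.mul_mem_of_left (toConv β) e1)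
    have f2 := hh _ (I.mul_mem_left (toConv (α ∘ₗ p)) e2)
    rw [LinearMap.convMul_apply] at f1 f2
    have m1 : TensorProduct.map (α - α ∘ₗ p) β =
        TensorProduct.map α β - TensorProduct.map (α ∘ₗ p) β := by
      ext; simp [TensorProduct.sub_tmul]
    have m2 : TensorProduct.map (α ∘ₗ p) (β - β ∘ₗ p) =
        TensorProduct.map (α ∘ₗ p) β - TensorProduct.map (α ∘ₗ p) (β ∘ₗ p) := by
      ext; simp [TensorProduct.tmul_sub]
    simp only at f1 f2
    rw [m1, LinearMap.sub_apply, map_sub, sub_eq_zero] at f1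
    rw [m2, LinearMap.sub_apply, map_sub, sub_eq_zero] at f2
    rw [map_sub, map_sub, f1, f2, TensorProduct.map_comp, LinearMap.comp_apply, sub_self]
  rw [key]
  exact aux_mem_range _ p hp2 _

theorem aux_closed (I : Ideal (WithConv (H →ₗ[k] k))) (W : Submodule k H)
    [FiniteDimensional k W]
    (hW : ∀ f : WithConv (H →ₗ[k] k), (∀ w ∈ W, f w = 0) → f ∈ I)
    (f : WithConv (H →ₗ[k] k)) (hf : ∀ v ∈ auxPerp (k := k) (I : Set (WithConv (H →ₗ[k] k))), f v = 0) : f ∈ I := by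
  let r : WithConv (H →ₗ[k] k) →ₗ[k] Module.Dual k W :=
    W.subtype.dualMap ∘ₗ (WithConv.linearEquiv k (H →ₗ[k] k)).toLinearMap
  have hr : ∀ f w, r f w = f (w : H) := fun f w => rfl
  let Φ : Submodule k (Module.Dual k W) := (I.restrictScalars k).map r
  have hD : FiniteDimensional k (Module.Dual k W) := inferInstance
  have hΦ : FiniteDimensional k Φ := FiniteDimensional.finiteDimensional_submodule Φ
  have h1 : r f ∈ Φ := by
    rw [← Subspace.dualCoannihilator_dualAnnihilator_eq (W := Φ)]
    rw [Submodule.mem_dualAnnihilator]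
    intro w hw
    rw [Submodule.mem_dualCoannihilator] at hw
    rw [hr]
    apply hf
    intro g hg
    exact hw (r g) ⟨g, hg, rfl⟩
  obtain ⟨g, hg, hgf⟩ := h1
  have h2 : f - g ∈ I := hW _ (by
    intro w hw
    have := LinearMap.congr_fun hgf ⟨w, hw⟩
    rw [hr, hr] at this
    simp [this])
  have h3 := I.add_mem h2 hg
  simpa using h3

theorem aux_perp_le (I : Set (WithConv (H →ₗ[k] k))) (W : Submodule k H)
    (hW : ∀ f : WithConv (H →ₗ[k] k), (∀ w ∈ W, f w = 0) → f ∈ I) : auxPerp I ≤ W := by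
  intro v hv
  by_contra hvW
  obtain ⟨f, h1, h2⟩ := Submodule.exists_le_ker_of_notMem hvW
  exact h1 (hv (toConv f) (hW _ (fun w hw => h2 hw)))

theorem aux_fundamental (h : H) : ∃ C : Submodule k H, h ∈ C ∧ FiniteDimensional k C ∧
    IsSubcoalgebra k H C := by
  let I : Ideal (WithConv (H →ₗ[k] k)) :=
    { carrier := {f | ∀ g g' : WithConv (H →ₗ[k] k), (g * f * g') h = 0}
      add_mem' := by
        intro a b ha hb g g'
        rw [mul_add, add_mul, ofConv_add, LinearMap.add_apply, ha, hb, add_zero]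
      zero_mem' := by intro g g'; rw [mul_zero, zero_mul]; rfl
      smul_mem' := by
        intro c x hx g g'
        rw [smul_eq_mul, ← mul_assoc]
        exact hx _ _ }
  have hI : I.IsTwoSided := ⟨by
    intro a b ha g g'
    rw [← mul_assoc, mul_assoc (g * a)]
    exact ha _ _⟩
  let r := Coalgebra.Repr.arbitrary k h
  let s := fun i => Coalgebra.Repr.arbitrary k (r.left i)
  let T : Set H := ⋃ i ∈ r.index, ⋃ j ∈ (s i).index, {(s i).right j}
  have hT : T.Finite := by
    refine Set.Finite.biUnion (Finset.finite_toSet _) fun i _ => ?_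
    exact Set.Finite.biUnion (Finset.finite_toSet _) fun j _ => Set.finite_singleton _
  let W := Submodule.span k T
  have : FiniteDimensional k W := FiniteDimensional.span_of_finite k hT
  have hW : ∀ f : WithConv (H →ₗ[k] k), (∀ w ∈ W, f w = 0) → f ∈ I := by
    intro f hf g g'
    rw [r.convMul_apply]
    apply Finset.sum_eq_zero
    intro i hi
    rw [(s i).convMul_apply, Finset.sum_eq_zero, zero_mul]
    intro j hj
    rw [hf, mul_zero]
    apply Submodule.subset_span
    simp only [T, Set.mem_iUnion]
    exact ⟨i, hi, j, hj, rfl⟩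
  refine ⟨auxPerp (I : Set _), ?_, ?_, aux_perp_sub I hI (aux_closed I W hW)⟩
  · intro f hf
    have := hf 1 1
    simpa only [one_mul, mul_one] using this
  · exact Submodule.finiteDimensional_of_le (aux_perp_le _ W hW)

/-- Functionals vanishing on a subcoalgebra. -/
theorem aux_mul_vanish {A : Type*} [Ring A] [Algebra k A] (V : Submodule k H)
    (hV : IsSubcoalgebra k H V) (f g : WithConv (H →ₗ[k] A))
    (hfg : (∀ v ∈ V, f v = 0) ∨ (∀ v ∈ V, g v = 0)) : ∀ v ∈ V, (f * g) v = 0 := by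
  intro v hv
  obtain ⟨y, hy⟩ := hV v hv
  rw [LinearMap.convMul_apply, ← hy, ← LinearMap.comp_apply (TensorProduct.map _ _),
    ← TensorProduct.map_comp]
  rcases hfg with h | h
  · have : f.ofConv ∘ₗ V.subtype = 0 := by ext x; exact h _ x.2
    rw [this]; simp
  · have : g.ofConv ∘ₗ V.subtype = 0 := by ext x; exact h _ x.2
    rw [this]; simp

def auxAnn (V : Submodule k H) (hV : IsSubcoalgebra k H V) : Ideal (WithConv (H →ₗ[k] k)) where
  carrier := {f | ∀ v ∈ V, f v = 0}
  add_mem' := by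
    intro a b ha hb v hv
    rw [ofConv_add, LinearMap.add_apply, ha v hv, hb v hv, add_zero]
  zero_mem' := by intro v _; rfl
  smul_mem' := by
    intro c f hf
    exact aux_mul_vanish V hV c f (Or.inr hf)

instance auxAnn_two (V : Submodule k H) (hV : IsSubcoalgebra k H V) :
    (auxAnn V hV).IsTwoSided := ⟨fun {a} b ha => aux_mul_vanish V hV a b (Or.inl ha)⟩

theorem aux_perp_ann (V : Submodule k H) (hV : IsSubcoalgebra k H V) :
    auxPerp (auxAnn V hV : Set _) = V := by
  apply le_antisymm
  · exact aux_perp_le _ V fun f hf => hf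
  · intro v hv f hf
    exact hf v hv

theorem aux_wedge (C₁ C₂ : Submodule k H) (h₁ : IsSubcoalgebra k H C₁)
    (b₁ : C₁ ≤ LinearMap.range (HopfAlgebra.antipode k (A := H)))
    (b₂ : C₂ ≤ LinearMap.range (HopfAlgebra.antipode k (A := H))) (x : H)
    (hx : ∀ f g : WithConv (H →ₗ[k] k), (∀ v ∈ C₁, f v = 0) → (∀ v ∈ C₂, g v = 0) →
      (f * g) x = 0) : x ∈ LinearMap.range (HopfAlgebra.antipode k (A := H)) := by
  obtain ⟨p, hp1, hp2⟩ := aux_proj C₁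
  obtain ⟨q, hq1, hq2⟩ := aux_proj C₂
  let i : WithConv (H →ₗ[k] H) := toConv LinearMap.id
  let S : WithConv (H →ₗ[k] H) := toConv (HopfAlgebra.antipode k (A := H))
  have hiS : i * S = 1 := LinearMap.id_mul_antipode
  have hSi : S * i = 1 := LinearMap.antipode_mul_id
  let F : WithConv (H →ₗ[k] H) := (i - toConv p) * S
  let G : WithConv (H →ₗ[k] H) := i - toConv q
  have hF : ∀ v ∈ C₁, F v = 0 :=
    aux_mul_vanish C₁ h₁ _ _ (Or.inl (by intro v hv; simp [i, hp1 v hv]))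
  have hG : ∀ v ∈ C₂, G v = 0 := by intro v hv; simp [G, i, hq1 v hv]
  have hFG : (F * G) x = 0 := by
    rw [LinearMap.convMul_apply]
    have : TensorProduct.map F.ofConv G.ofConv (Coalgebra.comul (R := k) x) = 0 := by
      apply aux_sep
      intro α β
      have := hx (toConv (α ∘ₗ F.ofConv)) (toConv (β ∘ₗ G.ofConv))
        (by intro v hv; simp [hF v hv]) (by intro v hv; simp [hG v hv])
      rw [LinearMap.convMul_apply] at this
      simpa only [ofConv_toConv, TensorProduct.map_comp, LinearMap.comp_apply] using this
    rw [this, map_zero]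
  have e : F * G = i - toConv p - toConv q + toConv p * S * toConv q := by
    have : F * G = (i * S) * i - toConv p * (S * i) - (i * S) * toConv q +
        toConv p * S * toConv q := by
      simp only [F, G]; noncomm_ring
    rw [this, hiS, hSi, one_mul, mul_one, one_mul]
  rw [e] at hFG
  have hmul : ∀ a ∈ LinearMap.range (HopfAlgebra.antipode k (A := H)),
      ∀ b ∈ LinearMap.range (HopfAlgebra.antipode k (A := H)),
      a * b ∈ LinearMap.range (HopfAlgebra.antipode k (A := H)) := by
    rintro _ ⟨a, rfl⟩ _ ⟨b, rfl⟩
    exact ⟨b * a, HopfAlgebra.antipode_mul_antidistrib _ _⟩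
  have hconv : ∀ f g : WithConv (H →ₗ[k] H),
      (∀ v, f v ∈ LinearMap.range (HopfAlgebra.antipode k (A := H))) →
      (∀ v, g v ∈ LinearMap.range (HopfAlgebra.antipode k (A := H))) →
      ∀ v, (f * g) v ∈ LinearMap.range (HopfAlgebra.antipode k (A := H)) := by
    intro f g hf hg v
    rw [(Coalgebra.Repr.arbitrary k v).convMul_apply]
    exact Submodule.sum_mem _ fun j _ => hmul _ (hf _) _ (hg _)
  have hlast := hconv (toConv p * S) (toConv q)
    (hconv (toConv p) S (fun v => b₁ (hp2 v)) (fun v => ⟨v, rfl⟩)) (fun v => b₂ (hq2 v)) x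
  have hxe : x = p x + q x - (toConv p * S * toConv q) x := by
    simp only [ofConv_add, ofConv_sub, LinearMap.add_apply, LinearMap.sub_apply, i,
      LinearMap.id_apply] at hFG
    rw [← sub_eq_zero, ← hFG]; abel
  rw [hxe]
  exact Submodule.sub_mem _ (Submodule.add_mem _ (b₁ (hp2 x)) (b₂ (hq2 x))) hlast

theorem aux_main
    (h : ∀ V : Submodule k H, IsSimpleSubcoalgebra k H V →
      V ≤ LinearMap.range (HopfAlgebra.antipode k (A := H))) (n : ℕ) :
    ∀ C : Submodule k H, IsSubcoalgebra k H C → FiniteDimensional k C →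
      Module.finrank k C = n → C ≤ LinearMap.range (HopfAlgebra.antipode k (A := H)) := by
  induction n using Nat.strong_induction_on with
  | _ n ih =>
  intro C hC hfd hn
  let I := auxAnn C hC
  have hclosed : ∀ J : Ideal (WithConv (H →ₗ[k] k)), I ≤ J →
      ∀ f : WithConv (H →ₗ[k] k), (∀ v ∈ auxPerp (k := k) (J : Set (WithConv (H →ₗ[k] k))), f v = 0) → f ∈ J :=
    fun J hJ => aux_closed J C (fun f hf => hJ hf)
  have hle : ∀ J : Ideal (WithConv (H →ₗ[k] k)), I ≤ J → auxPerp (J : Set _) ≤ C :=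
    fun J hJ => aux_perp_le _ C (fun f hf => hJ hf)
  let r : WithConv (H →ₗ[k] k) →ₗ[k] Module.Dual k C :=
    C.subtype.dualMap ∘ₗ (WithConv.linearEquiv k (H →ₗ[k] k)).toLinearMap
  have hfin : Module.Finite k (WithConv (H →ₗ[k] k) ⧸ I) := by
    have hk : I.restrictScalars k ≤ LinearMap.ker r := by
      intro f hf
      ext v
      exact hf v v.2
    let r' : (WithConv (H →ₗ[k] k) ⧸ I.restrictScalars k) →ₗ[k] Module.Dual k C :=
      (I.restrictScalars k).liftQ r hk
    have hinj : Function.Injective r' := by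
      rw [← LinearMap.ker_eq_bot]
      apply Submodule.ker_liftQ_eq_bot
      intro f hf v hv
      exact LinearMap.congr_fun hf ⟨v, hv⟩
    have : Module.Finite k (WithConv (H →ₗ[k] k) ⧸ I.restrictScalars k) :=
      Module.Finite.of_injective r' hinj
    exact Module.Finite.equiv (Submodule.Quotient.restrictScalarsEquiv k I)
  have hart : IsArtinianRing (WithConv (H →ₗ[k] k) ⧸ I) := IsArtinianRing.of_finite k _
  by_cases hp : ∀ J K : Ideal (WithConv (H →ₗ[k] k) ⧸ I), J.IsTwoSided → K.IsTwoSided →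
      (∀ a ∈ J, ∀ b ∈ K, a * b = 0) → J = ⊥ ∨ K = ⊥
  · have hs := aux_prime_artinian hp
    by_cases hC0 : C = ⊥
    · rw [hC0]; exact bot_le
    apply h
    refine ⟨hC, hC0, fun W hW hWC => ?_⟩
    have hIW : I ≤ auxAnn W hW := fun f hf v hv => hf v (hWC hv)
    rcases hs ((auxAnn W hW).map (Ideal.Quotient.mk I)) inferInstance with h1 | h1
    · right
      have : auxAnn W hW ≤ I := by
        intro f hf
        have := Ideal.mem_map_of_mem (Ideal.Quotient.mk I) hf
        rw [h1] at this
        exact Ideal.Quotient.eq_zero_iff_mem.1 this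
      rw [← aux_perp_ann W hW, ← aux_perp_ann C hC, le_antisymm this hIW]
    · left
      have h2 : (1 : WithConv (H →ₗ[k] k)) ∈ auxAnn W hW := by
        have : (Ideal.Quotient.mk I 1) ∈ (auxAnn W hW).map (Ideal.Quotient.mk I) := by
          rw [h1]; trivial
        rw [Ideal.mem_quotient_iff_mem hIW] at this
        exact this
      rw [← aux_perp_ann W hW, eq_bot_iff]
      apply aux_perp_le
      intro f _
      rw [(Ideal.eq_top_iff_one _).2 h2]
      trivial
  · push Not at hp
    obtain ⟨J, K, hJ, hK, hJK, hJ0, hK0⟩ := hp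
    let π := Ideal.Quotient.mk I
    have step : ∀ L : Ideal (WithConv (H →ₗ[k] k) ⧸ I), L.IsTwoSided → L ≠ ⊥ →
        IsSubcoalgebra k H (auxPerp (L.comap π : Set _)) ∧
        auxPerp (L.comap π : Set _) ≤ LinearMap.range (HopfAlgebra.antipode k (A := H)) := by
      intro L hL hL0
      have hIL : I ≤ L.comap π := by
        intro f hf
        rw [Ideal.mem_comap, show π f = 0 from Ideal.Quotient.eq_zero_iff_mem.2 hf]
        exact L.zero_mem
      have hsub := aux_perp_sub (L.comap π) inferInstance (hclosed _ hIL)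
      refine ⟨hsub, ?_⟩
      have hlt : auxPerp (L.comap π : Set _) < C := by
        refine lt_of_le_of_ne (hle _ hIL) fun heq => hL0 ?_
        rw [eq_bot_iff]
        intro y hy
        obtain ⟨f, rfl⟩ := Ideal.Quotient.mk_surjective y
        have : f ∈ I := by
          intro v hv
          rw [← heq] at hv
          exact hv f hy
        exact Ideal.Quotient.eq_zero_iff_mem.2 this
      refine ih _ ?_ _ hsub (Submodule.finiteDimensional_of_le hlt.le) rfl
      rw [← hn]
      exact Submodule.finrank_lt_finrank_of_lt hlt
    have sJ := step J hJ hJ0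
    have sK := step K hK hK0
    intro x hx
    refine aux_wedge _ _ sJ.1 sJ.2 sK.2 x fun f g hf hg => ?_
    have hfJ : f ∈ J.comap π := hclosed _ (by
        intro f hf
        rw [Ideal.mem_comap, show π f = 0 from Ideal.Quotient.eq_zero_iff_mem.2 hf]
        exact J.zero_mem) f hf
    have hgK : g ∈ K.comap π := hclosed _ (by
        intro f hf
        rw [Ideal.mem_comap, show π f = 0 from Ideal.Quotient.eq_zero_iff_mem.2 hf]
        exact K.zero_mem) g hg
    have h0 : π (f * g) = 0 := by rw [map_mul]; exact hJK _ hfJ _ hgK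
    exact (Ideal.Quotient.eq_zero_iff_mem.1 h0 : f * g ∈ I) x hx

end helpers

/-- if the image of the antipode `S` of a Hopf algebra `H` contains every simple
subcoalgebra of `H` (i.e. `S(H)` contains the coradical `H₀`), then `S` is surjective. -/
theorem antipode_surjective_of_coradical_le_range
    (h : ∀ V : Submodule k H, IsSimpleSubcoalgebra k H V →
      V ≤ LinearMap.range (HopfAlgebra.antipode (R := k) (A := H))) :
    Function.Surjective (HopfAlgebra.antipode (R := k) (A := H)) := by
  intro x
  obtain ⟨C, hx, hfd, hC⟩ := aux_fundamental (k := k) x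
  exact aux_main h _ C hC hfd rfl hx
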